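/- Let b ∈ X₀([0,T₀]×D_{R₀}) satisfy |b(t,x)| ≤ B·m(t) on [0,T₀]×D_{R₀} for a weight function m and B > 0; set φ(t) = ∫₀^t m(τ)/τ dτ, take 0 < T < T₀, 0 < R < R₀, 0 < r ≤ 1/B, and W = {(t,x) ∈ [0,T]×D_R : φ(t)/r + |x| < R}. Let φ(t;t₀,x₀) be the unique solution of dx/dt = −b(t,x)/t with x(t₀) = x₀. Then: for every (t₀,x₀) ∈ W, the characteristic curve satisfies (t, φ(t;t₀,x₀)) ∈ W for all 0 ≤ t ≤ t₀ (in particular φ(t;t₀,x₀) extends to [0,t₀]), and moreover φ(t)/r + |φ(t;t₀,x₀)| ≤ φ(t₀)/r + |x₀| < R for 0 ≤ t ≤ t₀. -/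

import Mathlib

open Set Filter MeasureTheory Metric Topology Complex

noncomputable section

/-- A *weight function* on `(0, T₀]`: increasing, continuous and positive on `(0,T₀]`,
with `∫₀^{T₀} m(τ)/τ dτ < ∞`. -/
def IsWeight (T₀ : ℝ) (m : ℝ → ℝ) : Prop :=
  MonotoneOn m (Set.Ioc 0 T₀) ∧ ContinuousOn m (Set.Ioc 0 T₀) ∧
    (∀ t ∈ Set.Ioc (0 : ℝ) T₀, 0 < m t) ∧
    MeasureTheory.IntegrableOn (fun τ => m τ / τ) (Set.Ioc 0 T₀)

/-- `φ(t) = ∫₀ᵗ m(τ)/τ dτ`. -/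
def wphi (m : ℝ → ℝ) (t : ℝ) : ℝ := ∫ τ in Set.Ioc (0 : ℝ) t, m τ / τ

/-- `f ∈ X₀(S × D_R)` : continuous on `S × D_R`, holomorphic in `x` for each fixed `t`. -/
def MemX0 (S : Set ℝ) (R : ℝ) (f : ℝ → ℂ → ℂ) : Prop :=
  ContinuousOn (fun p : ℝ × ℂ => f p.1 p.2) (S ×ˢ Metric.ball (0 : ℂ) R) ∧
    ∀ t ∈ S, DifferentiableOn ℂ (f t) (Metric.ball (0 : ℂ) R)

/-- `f ∈ X₁(S × D_R)` : `f ∈ X₀`, with a `t`-derivative for `t > 0` such that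
`t ∂f/∂t ∈ X₀`. -/
def MemX1 (S : Set ℝ) (R : ℝ) (f : ℝ → ℂ → ℂ) : Prop :=
  MemX0 S R f ∧
    ∃ g : ℝ → ℂ → ℂ, MemX0 S R g ∧
      ∀ t ∈ S, 0 < t → ∀ x ∈ Metric.ball (0 : ℂ) R,
        HasDerivWithinAt (fun s => f s x) (g t x / (t : ℂ)) S t

/-- `u` solves equation (E) :
`t ∂u/∂t = a + λ u + b ∂u/∂x + Σ_{j+α≥2} a_{j,α} u^j (∂u/∂x)^α` on `(0,T] × D_R`. -/
def SolvesE (T R : ℝ) (a lam b : ℝ → ℂ → ℂ) (c : ℕ → ℕ → ℝ → ℂ → ℂ)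
    (u : ℝ → ℂ → ℂ) : Prop :=
  ∀ t ∈ Set.Ioc (0 : ℝ) T, ∀ x ∈ Metric.ball (0 : ℂ) R,
    HasDerivWithinAt (fun s => u s x)
      ((a t x + lam t x * u t x + b t x * deriv (u t) x +
          ∑' p : ℕ × ℕ, c p.1 p.2 t x * u t x ^ p.1 * deriv (u t) x ^ p.2) / (t : ℂ))
      (Set.Ioc 0 T) t

/-- `u` is a germ (near the origin) solution of equation (E). -/
def GermSol (T₀ R₀ : ℝ) (a lam b : ℝ → ℂ → ℂ) (c : ℕ → ℕ → ℝ → ℂ → ℂ)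
    (u : ℝ → ℂ → ℂ) : Prop :=
  ∃ T, 0 < T ∧ T ≤ T₀ ∧ ∃ R, 0 < R ∧ R ≤ R₀ ∧ SolvesE T R a lam b c u

/-- the germ class `X₁^d`. -/
def MemX1d (d : ℝ) (u : ℝ → ℂ → ℂ) : Prop :=
  ∃ T > (0 : ℝ), ∃ R > (0 : ℝ), MemX1 (Set.Icc 0 T) R u ∧
    ∃ C > (0 : ℝ), ∀ t ∈ Set.Icc (0 : ℝ) T, ∀ x ∈ Metric.ball (0 : ℂ) R,
      max ‖u t x‖ ‖deriv (u t) x‖ ≤ C * t ^ d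

/-- the germ class `X₁⁺ = ⋃_{d>0} X₁^d`. -/
def MemX1plus (u : ℝ → ℂ → ℂ) : Prop := ∃ d > (0 : ℝ), MemX1d d u

/-- the germ class `X₁^{(μ)} = ⋂_{0<a<μ} X₁^a`. -/
def MemX1lt (μ : ℝ) (u : ℝ → ℂ → ℂ) : Prop := ∀ a : ℝ, 0 < a → a < μ → MemX1d a u

/-- two functions agree as germs on some `(0,ε] × D_δ`. -/
def GermEqPos (u v : ℝ → ℂ → ℂ) : Prop :=
  ∃ ε > (0 : ℝ), ∃ δ > (0 : ℝ), ∀ t ∈ Set.Ioc (0 : ℝ) ε, ∀ x ∈ Metric.ball (0 : ℂ) δ,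
    u t x = v t x

/-- the class `𝒳₁` (built on `X₁([0,T]×D_R)`) : the limsup-condition
`limsup_{ρ→0⁺} [ lim_{σ→0⁺} (1/ρ²) sup_{(0,σ)×D_ρ} |u| ] = 0`. -/
def MemXscrIcc (u : ℝ → ℂ → ℂ) : Prop :=
  (∃ T > (0 : ℝ), ∃ R > (0 : ℝ), MemX1 (Set.Icc 0 T) R u) ∧
    ∀ ε > (0 : ℝ), ∃ ρ₁ > (0 : ℝ), ∀ ρ, 0 < ρ → ρ < ρ₁ →
      ∃ σ > (0 : ℝ), ∀ t, 0 < t → t < σ → ∀ x ∈ Metric.ball (0 : ℂ) ρ,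
        ‖u t x‖ ≤ ε * ρ ^ 2

/-- the class `𝒳₁` (built on `X₁((0,T]×D_R)`). -/
def MemXscrIoc (u : ℝ → ℂ → ℂ) : Prop :=
  (∃ T > (0 : ℝ), ∃ R > (0 : ℝ), MemX1 (Set.Ioc 0 T) R u) ∧
    ∀ ε > (0 : ℝ), ∃ ρ₁ > (0 : ℝ), ∀ ρ, 0 < ρ → ρ < ρ₁ →
      ∃ σ > (0 : ℝ), ∀ t, 0 < t → t < σ → ∀ x ∈ Metric.ball (0 : ℂ) ρ,
        ‖u t x‖ ≤ ε * ρ ^ 2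

/-- `ψ` is holomorphic in a neighborhood of `x = 0`. -/
def HoloGerm (ψ : ℂ → ℂ) : Prop :=
  ∃ r > (0 : ℝ), DifferentiableOn ℂ ψ (Metric.ball (0 : ℂ) r)

/-- `t^{-λ(0,x)} w(t,x) → ψ(x)` as `t → 0⁺`, uniformly near `x = 0`,
where `t^{-λ(0,x)} = exp(-λ(0,x) log t)`. -/
def BndLimit (lam0 : ℂ → ℂ) (w : ℝ → ℂ → ℂ) (ψ : ℂ → ℂ) : Prop :=
  ∃ δ > (0 : ℝ), TendstoUniformlyOn
    (fun t x => Complex.exp (-(lam0 x) * (Real.log t : ℂ)) * w t x) ψ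
    (nhdsWithin 0 (Set.Ioi 0)) (Metric.ball (0 : ℂ) δ)

/-- `lim_{t→0⁺} sup_{x ∈ D_R} |t^{-d} u(t,x)| = 0`. -/
def SmalloOnBall (d R : ℝ) (u : ℝ → ℂ → ℂ) : Prop :=
  ∀ ε > (0 : ℝ), ∃ τ > (0 : ℝ), ∀ t, 0 < t → t < τ → ∀ x ∈ Metric.ball (0 : ℂ) R,
    ‖u t x‖ ≤ ε * t ^ d

/-- `f ∈ X₀(W)` for a general domain `W ⊆ ℝ × ℂ`. -/
def MemX0W (W : Set (ℝ × ℂ)) (f : ℝ → ℂ → ℂ) : Prop :=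
  ContinuousOn (fun p : ℝ × ℂ => f p.1 p.2) W ∧
    ∀ t : ℝ, DifferentiableOn ℂ (f t) {y : ℂ | (t, y) ∈ W}

/-- `f ∈ X₁(W)` for a general domain `W ⊆ ℝ × ℂ`. -/
def MemX1W (W : Set (ℝ × ℂ)) (f : ℝ → ℂ → ℂ) : Prop :=
  MemX0W W f ∧
    ∃ g : ℝ → ℂ → ℂ, MemX0W W g ∧
      ∀ t x, (t, x) ∈ W → 0 < t →
        HasDerivWithinAt (fun s => f s x) (g t x / (t : ℂ)) {s : ℝ | (s, x) ∈ W} t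

/-- `w` solves `t ∂w/∂t = λ w + b ∂w/∂x + g` on the domain `W`. -/
def SolvesLW (W : Set (ℝ × ℂ)) (lam b g w : ℝ → ℂ → ℂ) : Prop :=
  ∀ t x, (t, x) ∈ W → 0 < t →
    HasDerivWithinAt (fun s => w s x)
      ((lam t x * w t x + b t x * deriv (w t) x + g t x) / (t : ℂ))
      {s : ℝ | (s, x) ∈ W} t

/-- `v` solves the homogeneous linear equation `t ∂v/∂t = λ v + b ∂v/∂x`
on the product domain `S × D_R`. -/
def SolvesLin (S : Set ℝ) (R : ℝ) (lam b : ℝ → ℂ → ℂ) (v : ℝ → ℂ → ℂ) : Prop :=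
  ∀ t ∈ S, 0 < t → ∀ x ∈ Metric.ball (0 : ℂ) R,
    HasDerivWithinAt (fun s => v s x)
      ((lam t x * v t x + b t x * deriv (v t) x) / (t : ℂ)) S t

/-- the characteristic domain `𝒟 = ⋃_{x₀ ∈ D_{R₁}} {(t, φ(t;T,x₀)) : 0 < t ≤ T}`. -/
def Dchar (T R₁ : ℝ) (Φ : ℝ → ℝ → ℂ → ℂ) : Set (ℝ × ℂ) :=
  {p : ℝ × ℂ | p.1 ∈ Set.Ioc (0 : ℝ) T ∧ ∃ x₀ ∈ Metric.ball (0 : ℂ) R₁, p.2 = Φ p.1 T x₀}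

/-- the domain `W = {(t,x) ∈ [0,T] × D_R : φ(t)/r + |x| < R}`. -/
def Wset (m : ℝ → ℝ) (T R r : ℝ) : Set (ℝ × ℂ) :=
  {p : ℝ × ℂ | p.1 ∈ Set.Icc (0 : ℝ) T ∧ p.2 ∈ Metric.ball (0 : ℂ) R ∧
    wphi m p.1 / r + ‖p.2‖ < R}

/-!
Since `φ' = m / t`, the bound on `b` says that along a characteristic `|dx/dt| ≤ (φ / r)'`, so
`φ(t) / r + |x(t)|` does not increase as `t` decreases; this keeps characteristics in `W`.

For existence, compose the field with the radial retraction onto a closed ball of radius slightly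
less than `R₀`. The field is then globally Lipschitz in `x` by Cauchy's estimate and bounded,
uniformly for `t` in compact subintervals of `(0, T₀)`, so solutions there exist and glue; their
speed is integrable up to `0`, which gives the limit at `t = 0`. The estimate above shows that the
solution never leaves the ball, hence solves the original equation. Uniqueness holds for `t > 0` by
the Lipschitz bound and at `t = 0` by continuity.
-/

section RadialRetraction

variable {E : Type*} [NormedAddCommGroup E] [NormedSpace ℝ E] {R : ℝ}

/-- The radial retraction of a real normed space onto the closed ball of radius `R` about `0`.
It is used to truncate a vector field which is only defined on that ball. -/
def radialRetraction (R : ℝ) (x : E) : E := (R / max R ‖x‖) • x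

lemma radialRetraction_of_norm_le (hR : 0 < R) {x : E} (hx : ‖x‖ ≤ R) :
    radialRetraction R x = x := by
  rw [radialRetraction, max_eq_left hx, div_self hR.ne', one_smul]

lemma max_norm_smul_radialRetraction (hR : 0 < R) (x : E) :
    max R ‖x‖ • radialRetraction R x = R • x := by
  rw [radialRetraction, smul_smul, mul_div_cancel₀ _ (lt_max_of_lt_left hR).ne']

lemma norm_radialRetraction_le (hR : 0 < R) (x : E) : ‖radialRetraction R x‖ ≤ R := by
  have hmax : 0 < max R ‖x‖ := lt_max_of_lt_left hR
  rw [radialRetraction, norm_smul, Real.norm_of_nonneg (by positivity), div_mul_eq_mul_div,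
    div_le_iff₀ hmax]
  gcongr
  exact le_max_right _ _

lemma radialRetraction_mem_closedBall (hR : 0 < R) (x : E) :
    radialRetraction R x ∈ closedBall (0 : E) R :=
  mem_closedBall_zero_iff.2 (norm_radialRetraction_le hR x)

lemma lipschitzWith_radialRetraction (hR : 0 < R) :
    LipschitzWith 2 (radialRetraction R : E → E) := by
  refine LipschitzWith.of_dist_le_mul fun x y => ?_
  set p := radialRetraction R x
  set q := radialRetraction R y
  have hmax : 0 < max R ‖x‖ := lt_max_of_lt_left hR
  have hdiff : |max R ‖y‖ - max R ‖x‖| ≤ ‖x - y‖ := by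
    rw [max_comm R, max_comm R, norm_sub_rev]
    exact (abs_max_sub_max_le_abs _ _ _).trans (abs_norm_sub_norm_le y x)
  have hsmul : max R ‖x‖ • (p - q) = R • (x - y) + (max R ‖y‖ - max R ‖x‖) • q := by
    rw [smul_sub, max_norm_smul_radialRetraction hR, sub_smul, max_norm_smul_radialRetraction hR,
      smul_sub]
    abel
  rw [dist_eq_norm, dist_eq_norm, NNReal.coe_ofNat]
  refine le_of_mul_le_mul_left ?_ hmax
  calc max R ‖x‖ * ‖p - q‖
      = ‖R • (x - y) + (max R ‖y‖ - max R ‖x‖) • q‖ := by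
        rw [← hsmul, norm_smul, Real.norm_of_nonneg hmax.le]
    _ ≤ ‖R • (x - y)‖ + ‖(max R ‖y‖ - max R ‖x‖) • q‖ := norm_add_le _ _
    _ = R * ‖x - y‖ + |max R ‖y‖ - max R ‖x‖| * ‖q‖ := by
        rw [norm_smul, norm_smul, Real.norm_of_nonneg hR.le, Real.norm_eq_abs]
    _ ≤ R * ‖x - y‖ + ‖x - y‖ * R := by
        gcongr
        exact norm_radialRetraction_le hR y
    _ = R * (2 * ‖x - y‖) := by ring
    _ ≤ max R ‖x‖ * (2 * ‖x - y‖) := by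
        gcongr
        exact le_max_left _ _

end RadialRetraction

section ODE

lemma exists_mem_Ioo_and_Icc_subset_Ioo {a b s t : ℝ} (hs : s ∈ Ioo a b) (ht : t ∈ Ioo a b) :
    ∃ p q, s ∈ Ioo p q ∧ t ∈ Ioo p q ∧ Icc p q ⊆ Ioo a b := by
  obtain ⟨p, hap, hp⟩ := exists_between (lt_min hs.1 ht.1)
  obtain ⟨q, hq, hqb⟩ := exists_between (max_lt hs.2 ht.2)
  rw [lt_min_iff] at hp
  rw [max_lt_iff] at hq
  exact ⟨p, q, ⟨hp.1, hq.1⟩, ⟨hp.2, hq.2⟩, Icc_subset_Ioo hap hqb⟩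

lemma exists_forall_mem_Icc_lipschitzOnWith {X Y : Type*} [PseudoEMetricSpace X]
    [PseudoEMetricSpace Y] {a b : ℝ} {v : ℝ → X → Y} {k : ℝ → NNReal} {S : Set X}
    (hk : ContinuousOn k (Icc a b)) (hv : ∀ t ∈ Icc a b, LipschitzOnWith (k t) (v t) S) :
    ∃ K, ∀ t ∈ Icc a b, LipschitzOnWith K (v t) S := by
  obtain ⟨K, hK⟩ := isCompact_Icc.bddAbove_image hk
  exact ⟨K, fun t ht => (hv t ht).weaken (hK (mem_image_of_mem k ht))⟩

variable {E : Type*} [NormedAddCommGroup E] [NormedSpace ℝ E] {a b s t t₀ R : ℝ} {x₀ : E}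
  {v : ℝ → E → E} {f h : ℝ → E} {g : ℝ → ℝ} {k : ℝ → NNReal}

lemma norm_le_norm_add_integral_of_norm_deriv_le {f' : ℝ → E} (hst : s ≤ t)
    (hfc : ContinuousOn f (Icc s t)) (hf : ∀ u ∈ Ioo s t, HasDerivAt f (f' u) u)
    (hf' : ∀ u ∈ Ioo s t, ‖f' u‖ ≤ g u) (hg : IntervalIntegrable g volume s t) :
    ‖f s‖ ≤ ‖f t‖ + ∫ u in s..t, g u := by
  have hsub : ‖f t - f s‖ ≤ ∫ u in s..t, g u :=
    norm_sub_le_integral_of_norm_deriv_le_of_le hst hfc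
      (fun u hu => (hf u hu).differentiableAt.differentiableWithinAt)
      (.of_forall fun u hu => (hf u hu).deriv ▸ hf' u hu) hg
  linarith [norm_le_norm_add_norm_sub (f t) (f s)]

lemma eqOn_Icc_of_hasDerivAt_Ioc {S : Set E} (hk : ContinuousOn k (Ioc a b))
    (hv : ∀ t ∈ Ioc a b, LipschitzOnWith (k t) (v t) S)
    (hfc : ContinuousOn f (Icc a b)) (hf : ∀ t ∈ Ioc a b, HasDerivAt f (v t (f t)) t)
    (hfS : ∀ t ∈ Ioc a b, f t ∈ S)
    (hhc : ContinuousOn h (Icc a b)) (hh : ∀ t ∈ Ioc a b, HasDerivAt h (v t (h t)) t)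
    (hhS : ∀ t ∈ Ioc a b, h t ∈ S) (hfh : f b = h b) :
    EqOn f h (Icc a b) := by
  rcases eq_or_ne a b with rfl | hab
  · simpa using hfh
  have hIoc : EqOn f h (Ioc a b) := by
    intro t ht
    have hsub : Icc t b ⊆ Ioc a b := fun u hu => ⟨ht.1.trans_le hu.1, hu.2⟩
    have hsub' : Ioc t b ⊆ Ioc a b := Ioc_subset_Ioc_left ht.1.le
    obtain ⟨K, hK⟩ :=
      exists_forall_mem_Icc_lipschitzOnWith (hk.mono hsub) (fun u hu => hv u (hsub hu))
    exact ODE_solution_unique_of_mem_Icc_left (s := fun _ => S)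
      (fun u hu => hK u (Ioc_subset_Icc_self hu))
      (hfc.mono (Icc_subset_Icc_left ht.1.le))
      (fun u hu => (hf u (hsub' hu)).hasDerivWithinAt) (fun u hu => hfS u (hsub' hu))
      (hhc.mono (Icc_subset_Icc_left ht.1.le))
      (fun u hu => (hh u (hsub' hu)).hasDerivWithinAt) (fun u hu => hhS u (hsub' hu))
      hfh ⟨le_rfl, ht.2⟩
  exact hIoc.of_subset_closure hfc hhc Ioc_subset_Icc_self (closure_Ioc hab).ge

lemma eqOn_Ioo_of_hasDerivAt {S : Set E} (ht₀ : t₀ ∈ Ioo a b) (hk : ContinuousOn k (Ioo a b))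
    (hv : ∀ t ∈ Ioo a b, LipschitzOnWith (k t) (v t) S)
    (hf : ∀ t ∈ Ioo a b, HasDerivAt f (v t (f t)) t ∧ f t ∈ S)
    (hh : ∀ t ∈ Ioo a b, HasDerivAt h (v t (h t)) t ∧ h t ∈ S) (hfh : f t₀ = h t₀) :
    EqOn f h (Ioo a b) := by
  intro t ht
  obtain ⟨p, q, htpq, ht₀pq, hsub⟩ := exists_mem_Ioo_and_Icc_subset_Ioo ht ht₀
  have hsub' : Ioo p q ⊆ Ioo a b := Ioo_subset_Icc_self.trans hsub
  obtain ⟨K, hK⟩ := exists_forall_mem_Icc_lipschitzOnWith (hk.mono hsub) fun u hu => hv u (hsub hu)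
  exact ODE_solution_unique_of_mem_Ioo (s := fun _ => S)
    (fun u hu => hK u (Ioo_subset_Icc_self hu)) ht₀pq
    (fun u hu => hf u (hsub' hu)) (fun u hu => hh u (hsub' hu)) hfh htpq

lemma exists_tendsto_nhdsGT_of_norm_deriv_le [CompleteSpace E] (hab : a < b)
    (hf : DifferentiableOn ℝ f (Ioo a b)) (hf' : ∀ t ∈ Ioo a b, ‖deriv f t‖ ≤ g t)
    (hg : IntegrableOn g (Ioo a b)) :
    ∃ l, Tendsto f (𝓝[>] a) (𝓝 l) := by
  obtain ⟨c, hc⟩ := nonempty_Ioo.2 hab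
  have hint : IntegrableOn (deriv f) (Ioo a b) :=
    hg.mono' (aestronglyMeasurable_deriv _ _)
      ((ae_restrict_iff' measurableSet_Ioo).2 (.of_forall hf'))
  have hprim : ContinuousOn (fun t => f c + ∫ u in c..t, deriv f u) (Icc a b) := by
    rw [← uIcc_of_le hab.le]
    refine continuousOn_const.add (intervalIntegral.continuousOn_primitive_interval'
      ((intervalIntegrable_iff_integrableOn_Ioo_of_le hab.le).2 hint) ?_)
    rw [uIcc_of_le hab.le]
    exact Ioo_subset_Icc_self hc
  have heq : ∀ t ∈ Ioo a b, f c + ∫ u in c..t, deriv f u = f t := by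
    intro t ht
    have hsub : uIcc c t ⊆ Ioo a b := ordConnected_Ioo.uIcc_subset hc ht
    rw [intervalIntegral.integral_deriv_eq_sub
      (fun u hu => hf.differentiableAt (isOpen_Ioo.mem_nhds (hsub hu)))
      (hint.mono_set hsub).intervalIntegrable, add_sub_cancel]
  refine ⟨f c + ∫ u in c..a, deriv f u, ?_⟩
  rw [← nhdsWithin_Ioo_eq_nhdsGT hab]
  exact ((hprim a (left_mem_Icc.2 hab.le)).mono Ioo_subset_Icc_self).tendsto.congr'
    (eventually_mem_nhdsWithin.mono heq)

variable [CompleteSpace E]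

lemma exists_forall_mem_Icc_hasDerivWithinAt_of_lipschitzWith {K L : NNReal}
    (ht₀ : t₀ ∈ Icc a b) (hvc : ∀ x, ContinuousOn (v · x) (Icc a b))
    (hvK : ∀ t ∈ Icc a b, LipschitzWith K (v t)) (hvL : ∀ t ∈ Icc a b, ∀ x, ‖v t x‖ ≤ L)
    (x₀ : E) :
    ∃ z : ℝ → E, z t₀ = x₀ ∧ ∀ t ∈ Icc a b, HasDerivWithinAt z (v t (z t)) (Icc a b) t := by
  have hP : IsPicardLindelof v ⟨t₀, ht₀⟩ x₀ (L * (b - a).toNNReal) 0 L K :=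
    { lipschitzOnWith := fun t ht => (hvK t ht).lipschitzOnWith
      continuousOn := fun x _ => hvc x
      norm_le := fun t ht x _ => hvL t ht x
      mul_max_le := by
        rw [NNReal.coe_mul, Real.coe_toNNReal _ (sub_nonneg.2 (ht₀.1.trans ht₀.2)),
          NNReal.coe_zero, sub_zero]
        gcongr
        exact max_le (by linarith [ht₀.1]) (by linarith [ht₀.2]) }
  exact hP.exists_eq_forall_mem_Icc_hasDerivWithinAt₀

lemma exists_forall_mem_Ioo_hasDerivAt_of_Icc_lipschitzWith (ht₀ : t₀ ∈ Ioo a b)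
    (hvc : ∀ x, ContinuousOn (v · x) (Icc a b))
    (hk : ContinuousOn k (Icc a b)) (hvk : ∀ t ∈ Icc a b, LipschitzWith (k t) (v t))
    (hg : ContinuousOn g (Icc a b)) (hvg : ∀ t ∈ Icc a b, ∀ x, ‖v t x‖ ≤ g t) (x₀ : E) :
    ∃ z : ℝ → E, z t₀ = x₀ ∧ ∀ t ∈ Ioo a b, HasDerivAt z (v t (z t)) t := by
  obtain ⟨K, hK⟩ := exists_forall_mem_Icc_lipschitzOnWith hk
    fun t ht => (hvk t ht).lipschitzOnWith (s := univ)
  obtain ⟨L, hL⟩ := isCompact_Icc.exists_bound_of_continuousOn hg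
  obtain ⟨z, hz₀, hz⟩ := exists_forall_mem_Icc_hasDerivWithinAt_of_lipschitzWith (L := L.toNNReal)
    (Ioo_subset_Icc_self ht₀) hvc (fun t ht => lipschitzOnWith_univ.1 (hK t ht))
    (fun t ht x => (hvg t ht x).trans
      ((Real.le_norm_self _).trans ((hL t ht).trans (Real.le_coe_toNNReal L)))) x₀
  exact ⟨z, hz₀, fun t ht =>
    (hz t (Ioo_subset_Icc_self ht)).hasDerivAt (Icc_mem_nhds ht.1 ht.2)⟩

lemma exists_forall_mem_Ioo_hasDerivAt_of_lipschitzWith (ht₀ : t₀ ∈ Ioo a b)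
    (hvc : ∀ x, ContinuousOn (v · x) (Ioo a b))
    (hk : ContinuousOn k (Ioo a b)) (hvk : ∀ t ∈ Ioo a b, LipschitzWith (k t) (v t))
    (hg : ContinuousOn g (Ioo a b)) (hvg : ∀ t ∈ Ioo a b, ∀ x, ‖v t x‖ ≤ g t) (x₀ : E) :
    ∃ z : ℝ → E, z t₀ = x₀ ∧ ∀ t ∈ Ioo a b, HasDerivAt z (v t (z t)) t := by
  -- Solve on a compact neighbourhood of `{t, t₀}` for each `t`, then take the diagonal.
  choose! p q hself hbase hsub using
    fun t (ht : t ∈ Ioo a b) => exists_mem_Ioo_and_Icc_subset_Ioo ht ht₀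
  choose! Z hZ₀ hZ using fun t ht => exists_forall_mem_Ioo_hasDerivAt_of_Icc_lipschitzWith
    (hbase t ht) (fun x => (hvc x).mono (hsub t ht)) (hk.mono (hsub t ht))
    (fun s hs => hvk s (hsub t ht hs)) (hg.mono (hsub t ht)) (fun s hs => hvg s (hsub t ht hs)) x₀
  have hagree : ∀ s ∈ Ioo a b, ∀ t ∈ Ioo a b,
      EqOn (Z s) (Z t) (Ioo (p s) (q s) ∩ Ioo (p t) (q t)) := by
    intro s hs t ht
    have hinter := Ioo_inter_Ioo (a₁ := p s) (b₁ := q s) (a₂ := p t) (b₂ := q t)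
    have hmem_s := fun u hu => (hinter.ge hu : u ∈ Ioo (p s) (q s) ∩ Ioo (p t) (q t)).1
    have hmem_t := fun u hu => (hinter.ge hu : u ∈ Ioo (p s) (q s) ∩ Ioo (p t) (q t)).2
    have hmem_ab := fun u hu => hsub s hs (Ioo_subset_Icc_self (hmem_s u hu))
    rw [hinter]
    exact eqOn_Ioo_of_hasDerivAt (S := univ) (hinter.le ⟨hbase s hs, hbase t ht⟩)
      (hk.mono hmem_ab) (fun u hu => (hvk u (hmem_ab u hu)).lipschitzOnWith)
      (fun u hu => ⟨hZ s hs u (hmem_s u hu), mem_univ _⟩)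
      (fun u hu => ⟨hZ t ht u (hmem_t u hu), mem_univ _⟩) ((hZ₀ s hs).trans (hZ₀ t ht).symm)
  refine ⟨fun t => Z t t, hZ₀ t₀ ht₀, fun t ht =>
    (hZ t ht t (hself t ht)).congr_of_eventuallyEq ?_⟩
  filter_upwards [isOpen_Ioo.mem_nhds (hself t ht), isOpen_Ioo.mem_nhds ht] with s hst hs
  exact hagree s hs t ht ⟨hself s hs, hst⟩

theorem exists_continuousOn_Ico_forall_mem_Ioo_hasDerivAt (ht₀ : t₀ ∈ Ioo a b)
    (hvc : ∀ x, ContinuousOn (v · x) (Ioo a b))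
    (hk : ContinuousOn k (Ioo a b)) (hvk : ∀ t ∈ Ioo a b, LipschitzWith (k t) (v t))
    (hg : ContinuousOn g (Ioo a b)) (hgi : IntegrableOn g (Ioo a b))
    (hvg : ∀ t ∈ Ioo a b, ∀ x, ‖v t x‖ ≤ g t) (x₀ : E) :
    ∃ z : ℝ → E, ContinuousOn z (Ico a b) ∧ z t₀ = x₀ ∧
      ∀ t ∈ Ioo a b, HasDerivAt z (v t (z t)) t := by
  obtain ⟨w, hw₀, hw⟩ :=
    exists_forall_mem_Ioo_hasDerivAt_of_lipschitzWith ht₀ hvc hk hvk hg hvg x₀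
  have hwc : ContinuousOn w (Ioo a b) := HasDerivAt.continuousOn hw
  obtain ⟨l, hl⟩ : ∃ l, Tendsto w (𝓝[>] a) (𝓝 l) :=
    exists_tendsto_nhdsGT_of_norm_deriv_le (ht₀.1.trans ht₀.2)
      (fun t ht => (hw t ht).differentiableAt.differentiableWithinAt)
      (fun t ht => (hw t ht).deriv ▸ hvg t ht (w t)) hgi
  have hzw : EqOn (extendFrom (Ioo a b) w) w (Ioo a b) := extendFrom_extends hwc
  refine ⟨extendFrom (Ioo a b) w, continuousOn_Ico_extendFrom_Ioo hwc hl,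
    (hzw ht₀).trans hw₀, fun t ht => ?_⟩
  rw [hzw ht]
  exact (hw t ht).congr_of_eventuallyEq (hzw.eventuallyEq_of_mem (isOpen_Ioo.mem_nhds ht))

theorem exists_hasDerivAt_of_norm_add_integral_le (hR : 0 < R) (ht₀ : t₀ ∈ Ioo a b)
    (hvc : ∀ x ∈ closedBall 0 R, ContinuousOn (v · x) (Ioo a b))
    (hk : ContinuousOn k (Ioo a b))
    (hvk : ∀ t ∈ Ioo a b, LipschitzOnWith (k t) (v t) (closedBall 0 R))
    (hg : ContinuousOn g (Ioo a b)) (hgi : IntegrableOn g (Ioo a b))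
    (hvg : ∀ t ∈ Ioo a b, ∀ x ∈ closedBall 0 R, ‖v t x‖ ≤ g t)
    (hx₀ : ‖x₀‖ + ∫ t in a..t₀, g t ≤ R) :
    ∃ z : ℝ → E, ContinuousOn z (Icc a t₀) ∧ z t₀ = x₀ ∧
      (∀ t ∈ Ioc a t₀, HasDerivAt z (v t (z t)) t) ∧ ∀ t ∈ Icc a t₀, ‖z t‖ ≤ R := by
  have hmem : ∀ x : E, radialRetraction R x ∈ closedBall 0 R := radialRetraction_mem_closedBall hR
  obtain ⟨z, hzc, hz₀, hz⟩ := exists_continuousOn_Ico_forall_mem_Ioo_hasDerivAt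
    (v := fun t x => v t (radialRetraction R x)) (k := fun t => k t * 2) ht₀
    (fun x => hvc _ (hmem x)) (hk.mul continuousOn_const)
    (fun t ht => lipschitzOnWith_univ.1 ((hvk t ht).comp
      (lipschitzWith_radialRetraction hR).lipschitzOnWith fun x _ => hmem x))
    hg hgi (fun t ht x => hvg t ht _ (hmem x)) x₀
  have hzc' : ContinuousOn z (Icc a t₀) := hzc.mono (Icc_subset_Ico_right ht₀.2)
  have hgi₀ : IntervalIntegrable g volume a t₀ :=
    (intervalIntegrable_iff_integrableOn_Ioo_of_le ht₀.1.le).2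
      (hgi.mono_set (Ioo_subset_Ioo_right ht₀.2.le))
  have hg₀ : ∀ t ∈ Ioo a b, 0 ≤ g t := fun t ht =>
    (norm_nonneg _).trans (hvg t ht 0 (mem_closedBall_self hR.le))
  have hzR : ∀ t ∈ Icc a t₀, ‖z t‖ ≤ R := by
    intro t ht
    have hsub : Ioo t t₀ ⊆ Ioo a b := Ioo_subset_Ioo ht.1 ht₀.2.le
    calc ‖z t‖ ≤ ‖z t₀‖ + ∫ u in t..t₀, g u :=
          norm_le_norm_add_integral_of_norm_deriv_le ht.2
            (hzc'.mono (Icc_subset_Icc_left ht.1)) (fun u hu => hz u (hsub hu))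
            (fun u hu => hvg u (hsub hu) _ (hmem _))
            (hgi₀.mono_set (uIcc_subset_uIcc (by rw [uIcc_of_le ht₀.1.le]; exact ht) (by simp)))
      _ ≤ ‖x₀‖ + ∫ u in a..t₀, g u := by
          rw [hz₀]
          gcongr
          refine intervalIntegral.integral_mono_interval ht.1 ht.2 le_rfl ?_ hgi₀
          exact (ae_restrict_iff' measurableSet_Ioc).2
            (.of_forall fun u hu => hg₀ u ⟨hu.1, hu.2.trans_lt ht₀.2⟩)
      _ ≤ R := hx₀
  refine ⟨z, hzc', hz₀, fun t ht => ?_, hzR⟩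
  simpa only [radialRetraction_of_norm_le hR (hzR t (Ioc_subset_Icc_self ht))] using
    hz t ⟨ht.1, ht.2.trans_lt ht₀.2⟩

end ODE

section Cauchy

variable {F : Type*} [NormedAddCommGroup F] [NormedSpace ℂ F] {f : ℂ → F} {c : ℂ} {R ρ M : ℝ}

lemma lipschitzOnWith_closedBall_of_forall_norm_le (hρ : 0 < ρ)
    (hf : DiffContOnCl ℂ f (ball c (R + ρ))) (hM : ∀ z ∈ closedBall c (R + ρ), ‖f z‖ ≤ M) :
    LipschitzOnWith (M / ρ).toNNReal f (closedBall c R) := by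
  have hball : ∀ z ∈ closedBall c R, ball z ρ ⊆ ball c (R + ρ) := fun z hz =>
    ball_subset_ball' (by linarith [mem_closedBall.1 hz])
  have hsphere : ∀ z ∈ closedBall c R, sphere z ρ ⊆ closedBall c (R + ρ) := fun z hz =>
    sphere_subset_closedBall.trans
      (closedBall_subset_closedBall' (by linarith [mem_closedBall.1 hz]))
  refine (convex_closedBall c R).lipschitzOnWith_of_nnnorm_deriv_le (𝕜 := ℂ) (fun z hz => ?_)
    fun z hz => ?_
  · exact hf.differentiableAt isOpen_ball (hball z hz (mem_ball_self hρ))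
  · rw [← NNReal.coe_le_coe, coe_nnnorm]
    exact (norm_deriv_le_of_forall_mem_sphere_norm_le hρ (hf.mono (hball z hz))
      fun w hw => hM w (hsphere z hz hw)).trans (Real.le_coe_toNNReal _)

end Cauchy

section Weight

variable {T₀ s t : ℝ} {m : ℝ → ℝ}

lemma wphi_zero (m : ℝ → ℝ) : wphi m 0 = 0 := by
  rw [wphi, Ioc_self, setIntegral_empty]

lemma wphi_nonneg (hm : ∀ τ ∈ Ioc 0 t, 0 ≤ m τ) : 0 ≤ wphi m t :=
  setIntegral_nonneg measurableSet_Ioc fun τ hτ => div_nonneg (hm τ hτ) hτ.1.le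

lemma continuousOn_div_id_Ioc (hm : ContinuousOn m (Ioc 0 T₀)) :
    ContinuousOn (fun τ => m τ / τ) (Ioc 0 T₀) :=
  hm.div continuousOn_id fun _ ht => ht.1.ne'

lemma intervalIntegrable_of_integrableOn_Ioc_zero {f : ℝ → ℝ} (hf : IntegrableOn f (Ioc 0 T₀))
    (hs : 0 ≤ s) (hst : s ≤ t) (ht : t ≤ T₀) : IntervalIntegrable f volume s t :=
  (intervalIntegrable_iff_integrableOn_Ioc_of_le hst).2 (hf.mono_set (Ioc_subset_Ioc hs ht))

lemma integral_eq_wphi_sub_wphi (hm : IntegrableOn (fun τ => m τ / τ) (Ioc 0 T₀))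
    (hs : 0 ≤ s) (hst : s ≤ t) (ht : t ≤ T₀) :
    ∫ τ in s..t, m τ / τ = wphi m t - wphi m s := by
  rw [wphi, wphi, ← intervalIntegral.integral_of_le (hs.trans hst),
    ← intervalIntegral.integral_of_le hs, intervalIntegral.integral_interval_sub_left
      (intervalIntegrable_of_integrableOn_Ioc_zero hm le_rfl (hs.trans hst) ht)
      (intervalIntegrable_of_integrableOn_Ioc_zero hm le_rfl hs (hst.trans ht))]

end Weight

section Characteristics

/-- The right-hand side of the characteristic equation `dx/dt = -b(t,x)/t`. -/
def charField (b : ℝ → ℂ → ℂ) (t : ℝ) (x : ℂ) : ℂ := -(b t x) / t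

variable {T₀ R₀ T R r s t t₀ : ℝ} {x x₀ : ℂ} {S S' : Set ℝ} {m : ℝ → ℝ} {b : ℝ → ℂ → ℂ}
  {y z : ℝ → ℂ}

lemma MemX0.mono (hb : MemX0 S' R b) (hS : S ⊆ S') : MemX0 S R b :=
  ⟨hb.1.mono (prod_mono_left hS), fun t ht => hb.2 t (hS ht)⟩

lemma MemX0.continuousOn_charField (hb : MemX0 S R b) (hS : 0 ∉ S) (hx : x ∈ ball 0 R) :
    ContinuousOn (charField b · x) S :=
  (hb.1.comp (continuousOn_id.prodMk continuousOn_const) fun _ ht => ⟨ht, hx⟩).neg.div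
    continuous_ofReal.continuousOn fun _ ht => ofReal_ne_zero.2 (ne_of_mem_of_not_mem ht hS)

lemma norm_charField_le (ht : 0 < t) (hb : ‖b t x‖ ≤ m t / r) :
    ‖charField b t x‖ ≤ m t / t / r := by
  rw [charField, norm_div, norm_neg, norm_real, Real.norm_of_nonneg ht.le, div_right_comm]
  gcongr

lemma lipschitzOnWith_charField (hRR₀ : R < R₀) (ht : 0 < t)
    (hbd : DifferentiableOn ℂ (b t) (ball 0 R₀)) (hb : ∀ x ∈ ball 0 R₀, ‖b t x‖ ≤ m t / r) :
    LipschitzOnWith (m t / t / r / ((R₀ - R) / 2)).toNNReal (charField b t) (closedBall 0 R) := by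
  have hsub : closedBall (0 : ℂ) (R + (R₀ - R) / 2) ⊆ ball 0 R₀ :=
    closedBall_subset_ball (by linarith)
  have hdiff : DifferentiableOn ℂ (charField b t) (ball 0 R₀) := hbd.neg.div_const _
  exact lipschitzOnWith_closedBall_of_forall_norm_le (by linarith)
    (hdiff.mono (closure_ball_subset_closedBall.trans hsub)).diffContOnCl
    fun x hx => norm_charField_le ht (hb x (hsub hx))

lemma continuousOn_lipschitz_const (hm : ContinuousOn m (Ioc 0 T₀)) (r ρ : ℝ) :
    ContinuousOn (fun t => (m t / t / r / ρ).toNNReal) (Ioc 0 T₀) :=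
  continuous_real_toNNReal.comp_continuousOn
    (((continuousOn_div_id_Ioc hm).div_const r).div_const ρ)

lemma wphi_div_nonneg (hR₀ : 0 < R₀) (hb : ∀ t ∈ Ioc 0 T₀, ∀ x ∈ ball 0 R₀, ‖b t x‖ ≤ m t / r)
    (hr : 0 < r) (ht : t ≤ T₀) : 0 ≤ wphi m t / r := by
  refine div_nonneg (wphi_nonneg fun τ hτ => ?_) hr.le
  have hdiv : 0 ≤ m τ / r :=
    (norm_nonneg _).trans (hb τ ⟨hτ.1, hτ.2.trans ht⟩ 0 (mem_ball_self hR₀))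
  simpa only [div_mul_cancel₀ _ hr.ne'] using mul_nonneg hdiv hr.le

lemma wphi_div_add_norm_le (hmi : IntegrableOn (fun τ => m τ / τ) (Ioc 0 T₀))
    (hb : ∀ t ∈ Ioc 0 T₀, ∀ x ∈ ball 0 R₀, ‖b t x‖ ≤ m t / r)
    (hs : 0 ≤ s) (hst : s ≤ t) (ht : t ≤ T₀) (hyc : ContinuousOn y (Icc s t))
    (hy : ∀ u ∈ Ioo s t, y u ∈ ball 0 R₀ ∧ HasDerivAt y (charField b u (y u)) u) :
    wphi m s / r + ‖y s‖ ≤ wphi m t / r + ‖y t‖ := by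
  have hmem : ∀ u ∈ Ioo s t, u ∈ Ioc 0 T₀ := fun u hu =>
    ⟨hs.trans_lt hu.1, hu.2.le.trans ht⟩
  have hnorm : ‖y s‖ ≤ ‖y t‖ + ∫ u in s..t, m u / u / r :=
    norm_le_norm_add_integral_of_norm_deriv_le hst hyc (fun u hu => (hy u hu).2)
      (fun u hu => norm_charField_le (hmem u hu).1 (hb u (hmem u hu) _ (hy u hu).1))
      ((intervalIntegrable_of_integrableOn_Ioc_zero hmi hs hst ht).div_const r)
  rw [intervalIntegral.integral_div, integral_eq_wphi_sub_wphi hmi hs hst ht, sub_div] at hnorm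
  linarith

lemma norm_le_wphi_div_add_norm (hmi : IntegrableOn (fun τ => m τ / τ) (Ioc 0 T₀))
    (hb : ∀ t ∈ Ioc 0 T₀, ∀ x ∈ ball 0 R₀, ‖b t x‖ ≤ m t / r) (hr : 0 < r)
    (ht₀ : t₀ ≤ T₀) (hyc : ContinuousOn y (Icc 0 t₀))
    (hy : ∀ t ∈ Ioc 0 t₀, y t ∈ ball 0 R₀ ∧ HasDerivAt y (charField b t (y t)) t)
    (ht : t ∈ Ioc 0 t₀) : ‖y t‖ ≤ wphi m t₀ / r + ‖y t₀‖ := by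
  have hφ : 0 ≤ wphi m t / r :=
    wphi_div_nonneg (pos_of_mem_ball (hy t ht).1) hb hr (ht.2.trans ht₀)
  have hest : wphi m t / r + ‖y t‖ ≤ wphi m t₀ / r + ‖y t₀‖ :=
    wphi_div_add_norm_le hmi hb ht.1.le ht.2 ht₀ (hyc.mono (Icc_subset_Icc_left ht.1.le))
      fun u hu => hy u ⟨ht.1.trans hu.1, hu.2.le⟩
  linarith

lemma mem_Wset_of_wphi_div_add_norm_le (hb : ∀ t ∈ Ioc 0 T₀, ∀ x ∈ ball 0 R₀, ‖b t x‖ ≤ m t / r)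
    (hr : 0 < r) (hTT₀ : T ≤ T₀) (hRR₀ : R ≤ R₀) (hW : (t₀, x₀) ∈ Wset m T R r)
    (ht : t ∈ Icc 0 t₀) (hx : wphi m t / r + ‖x‖ ≤ wphi m t₀ / r + ‖x₀‖) :
    (t, x) ∈ Wset m T R r := by
  obtain ⟨⟨-, ht₀T : t₀ ≤ T⟩, hx₀R, hlt : wphi m t₀ / r + ‖x₀‖ < R⟩ := hW
  have hφ : 0 ≤ wphi m t / r :=
    wphi_div_nonneg ((pos_of_mem_ball hx₀R).trans_le hRR₀) hb hr (by linarith [ht.2])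
  exact ⟨⟨ht.1, ht.2.trans ht₀T⟩, mem_ball_zero_iff.2 (by linarith), hx.trans_lt hlt⟩

theorem exists_characteristic (hbX : MemX0 (Ioc 0 T₀) R₀ b) (hmc : ContinuousOn m (Ioc 0 T₀))
    (hmi : IntegrableOn (fun τ => m τ / τ) (Ioc 0 T₀))
    (hb : ∀ t ∈ Ioc 0 T₀, ∀ x ∈ ball 0 R₀, ‖b t x‖ ≤ m t / r) (hr : 0 < r) (hR₀ : 0 < R₀)
    (ht₀ : t₀ ∈ Ioo 0 T₀) (hx₀ : wphi m t₀ / r + ‖x₀‖ < R₀) :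
    ∃ z : ℝ → ℂ, ContinuousOn z (Icc 0 t₀) ∧ z t₀ = x₀ ∧
      ∀ t ∈ Ioc 0 t₀, z t ∈ ball 0 R₀ ∧ HasDerivAt z (charField b t (z t)) t := by
  obtain ⟨R, hx₀R, hRR₀⟩ := exists_between hx₀
  have hφ : 0 ≤ wphi m t₀ / r := wphi_div_nonneg hR₀ hb hr ht₀.2.le
  have hR : 0 < R := (add_nonneg hφ (norm_nonneg x₀)).trans_lt hx₀R
  have hball : closedBall (0 : ℂ) R ⊆ ball 0 R₀ := closedBall_subset_ball hRR₀
  have hIoc : Ioo 0 T₀ ⊆ Ioc 0 T₀ := Ioo_subset_Ioc_self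
  have hlength : ‖x₀‖ + ∫ t in 0..t₀, m t / t / r ≤ R := by
    rw [intervalIntegral.integral_div, integral_eq_wphi_sub_wphi hmi le_rfl ht₀.1.le ht₀.2.le,
      wphi_zero, sub_zero, add_comm]
    exact hx₀R.le
  obtain ⟨z, hzc, hz₀, hz, hzR⟩ := exists_hasDerivAt_of_norm_add_integral_le hR ht₀
    (fun x hx => (hbX.continuousOn_charField left_notMem_Ioc (hball hx)).mono hIoc)
    ((continuousOn_lipschitz_const hmc r ((R₀ - R) / 2)).mono hIoc)
    (fun t ht => lipschitzOnWith_charField hRR₀ ht.1 (hbX.2 t (hIoc ht)) (hb t (hIoc ht)))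
    (((continuousOn_div_id_Ioc hmc).div_const r).mono hIoc)
    ((hmi.mono_set hIoc).div_const r)
    (fun t ht x hx => norm_charField_le ht.1 (hb t (hIoc ht) x (hball hx))) hlength
  exact ⟨z, hzc, hz₀, fun t ht =>
    ⟨mem_ball_zero_iff.2 ((hzR t (Ioc_subset_Icc_self ht)).trans_lt hRR₀), hz t ht⟩⟩

theorem eqOn_of_characteristics (hbX : MemX0 (Ioc 0 T₀) R₀ b) (hmc : ContinuousOn m (Ioc 0 T₀))
    (hmi : IntegrableOn (fun τ => m τ / τ) (Ioc 0 T₀))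
    (hb : ∀ t ∈ Ioc 0 T₀, ∀ x ∈ ball 0 R₀, ‖b t x‖ ≤ m t / r) (hr : 0 < r) (ht₀ : t₀ ≤ T₀)
    (hyc : ContinuousOn y (Icc 0 t₀))
    (hy : ∀ t ∈ Ioc 0 t₀, y t ∈ ball 0 R₀ ∧ HasDerivAt y (charField b t (y t)) t)
    (hzc : ContinuousOn z (Icc 0 t₀))
    (hz : ∀ t ∈ Ioc 0 t₀, z t ∈ ball 0 R₀ ∧ HasDerivAt z (charField b t (z t)) t)
    (hyz : y t₀ = z t₀) (hlt : wphi m t₀ / r + ‖y t₀‖ < R₀) :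
    EqOn y z (Icc 0 t₀) := by
  have hsub : Ioc 0 t₀ ⊆ Ioc 0 T₀ := Ioc_subset_Ioc_right ht₀
  refine eqOn_Icc_of_hasDerivAt_Ioc (S := closedBall 0 (wphi m t₀ / r + ‖y t₀‖))
    ((continuousOn_lipschitz_const hmc r _).mono hsub)
    (fun t ht => lipschitzOnWith_charField hlt ht.1 (hbX.2 t (hsub ht)) (hb t (hsub ht)))
    hyc (fun t ht => (hy t ht).2) (fun t ht => ?_) hzc (fun t ht => (hz t ht).2) (fun t ht => ?_)
    hyz
  · exact mem_closedBall_zero_iff.2 (norm_le_wphi_div_add_norm hmi hb hr ht₀ hyc hy ht)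
  · rw [hyz]
    exact mem_closedBall_zero_iff.2 (norm_le_wphi_div_add_norm hmi hb hr ht₀ hzc hz ht)

theorem statement9_general (hbX : MemX0 (Ioc 0 T₀) R₀ b) (hmc : ContinuousOn m (Ioc 0 T₀))
    (hmi : IntegrableOn (fun τ => m τ / τ) (Ioc 0 T₀))
    (hb : ∀ t ∈ Ioc 0 T₀, ∀ x ∈ ball 0 R₀, ‖b t x‖ ≤ m t / r) (hr : 0 < r)
    (hTT₀ : T < T₀) (hRR₀ : R ≤ R₀) (hW : (t₀, x₀) ∈ Wset m T R r) (ht₀ : 0 < t₀) :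
    (∀ t₁ ∈ Ico 0 t₀, ∀ y : ℝ → ℂ, y t₀ = x₀ →
      (∀ t ∈ Ioc t₁ t₀, y t ∈ ball 0 R₀ ∧ HasDerivAt y (charField b t (y t)) t) →
      ∀ t ∈ Ioc t₁ t₀,
        wphi m t / r + ‖y t‖ ≤ wphi m t₀ / r + ‖x₀‖ ∧ (t, y t) ∈ Wset m T R r) ∧
    ∃ z : ℝ → ℂ, ContinuousOn z (Icc 0 t₀) ∧ z t₀ = x₀ ∧
      (∀ t ∈ Ioc 0 t₀, HasDerivAt z (charField b t (z t)) t) ∧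
      (∀ t ∈ Icc 0 t₀,
        wphi m t / r + ‖z t‖ ≤ wphi m t₀ / r + ‖x₀‖ ∧ (t, z t) ∈ Wset m T R r) ∧
      ∀ y : ℝ → ℂ, ContinuousOn y (Icc 0 t₀) → y t₀ = x₀ →
        (∀ t ∈ Ioc 0 t₀, y t ∈ ball 0 R₀ ∧ HasDerivAt y (charField b t (y t)) t) →
        EqOn y z (Icc 0 t₀) := by
  have ht₀T₀ : t₀ < T₀ := hW.1.2.trans_lt hTT₀
  have hlt : wphi m t₀ / r + ‖x₀‖ < R₀ := hW.2.2.trans_le hRR₀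
  have hR₀ : 0 < R₀ := (pos_of_mem_ball hW.2.1).trans_le hRR₀
  have hest : ∀ y : ℝ → ℂ, y t₀ = x₀ → ∀ s ∈ Icc 0 t₀, ContinuousOn y (Icc s t₀) →
      (∀ t ∈ Ioc s t₀, y t ∈ ball 0 R₀ ∧ HasDerivAt y (charField b t (y t)) t) →
      wphi m s / r + ‖y s‖ ≤ wphi m t₀ / r + ‖x₀‖ ∧ (s, y s) ∈ Wset m T R r := by
    rintro y rfl s hs hyc hy
    have hle := wphi_div_add_norm_le hmi hb hs.1 hs.2 ht₀T₀.le hyc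
      fun u hu => hy u (Ioo_subset_Ioc_self hu)
    exact ⟨hle, mem_Wset_of_wphi_div_add_norm_le hb hr hTT₀.le hRR₀ hW hs hle⟩
  obtain ⟨z, hzc, hz₀, hz⟩ := exists_characteristic hbX hmc hmi hb hr hR₀ ⟨ht₀, ht₀T₀⟩ hlt
  refine ⟨fun t₁ ht₁ y hy₀ hy t ht => ?_, z, hzc, hz₀, fun t ht => (hz t ht).2, fun t ht => ?_,
    fun y hyc hy₀ hy => ?_⟩
  · have hsub : Icc t t₀ ⊆ Ioc t₁ t₀ := Icc_subset_Ioc ht.1 le_rfl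
    exact hest y hy₀ t ⟨ht₁.1.trans ht.1.le, ht.2⟩
      (HasDerivAt.continuousOn fun u hu => (hy u (hsub hu)).2)
      fun u hu => hy u (hsub (Ioc_subset_Icc_self hu))
  · exact hest z hz₀ t ht (hzc.mono (Icc_subset_Icc_left ht.1))
      fun u hu => hz u (Ioc_subset_Ioc_left ht.1 hu)
  · exact eqOn_of_characteristics hbX hmc hmi hb hr ht₀T₀.le hyc hy hzc hz
      (hy₀.trans hz₀.symm) (by rwa [hy₀])

end Characteristics

/-- Lemma 6.1.1 (1): for `(t₀,x₀) ∈ W`, every characteristic through `(t₀,x₀)`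
(i.e. solution of `dx/dt = -b(t,x)/t`, `x(t₀) = x₀`) stays in `W` for `0 ≤ t ≤ t₀`,
with `φ(t)/r + |x(t)| ≤ φ(t₀)/r + |x₀| < R`; in particular it extends to `[0,t₀]`. -/
theorem statement9
    (T₀ R₀ : ℝ) (hT₀ : 0 < T₀) (hR₀ : 0 < R₀)
    (m : ℝ → ℝ) (hm : IsWeight T₀ m)
    (b : ℝ → ℂ → ℂ) (hbX : MemX0 (Set.Icc 0 T₀) R₀ b)
    (B : ℝ) (hB : 0 < B)
    (hb : ∀ t ∈ Set.Ioc (0:ℝ) T₀, ∀ x ∈ Metric.ball (0:ℂ) R₀, ‖b t x‖ ≤ B * m t)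
    (T R r : ℝ) (hT : 0 < T) (hTT₀ : T < T₀) (hR : 0 < R) (hRR₀ : R < R₀)
    (hr : 0 < r) (hrB : r ≤ 1 / B)
    :
    ∀ t₀ : ℝ, ∀ x₀ : ℂ, (t₀, x₀) ∈ Wset m T R r → 0 < t₀ →
      -- (a priori estimate) any partial solution on `(t₁, t₀]` stays in `W` :
      (∀ t₁ ∈ Set.Ico (0:ℝ) t₀, ∀ y : ℝ → ℂ, y t₀ = x₀ →
        (∀ t ∈ Set.Ioc t₁ t₀, y t ∈ Metric.ball (0:ℂ) R₀ ∧
          HasDerivAt y (-(b t (y t)) / (t:ℂ)) t) →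
        ∀ t ∈ Set.Ioc t₁ t₀,
          wphi m t / r + ‖y t‖ ≤ wphi m t₀ / r + ‖x₀‖ ∧ (t, y t) ∈ Wset m T R r) ∧
      -- and the characteristic exists on all of `[0, t₀]`, staying in `W` :
      (∃ z : ℝ → ℂ, ContinuousOn z (Set.Icc 0 t₀) ∧ z t₀ = x₀ ∧
        (∀ t ∈ Set.Ioc (0:ℝ) t₀, HasDerivAt z (-(b t (z t)) / (t:ℂ)) t) ∧
        (∀ t ∈ Set.Icc (0:ℝ) t₀,
          wphi m t / r + ‖z t‖ ≤ wphi m t₀ / r + ‖x₀‖ ∧ (t, z t) ∈ Wset m T R r) ∧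
        -- `z` is the unique such solution :
        (∀ y : ℝ → ℂ, ContinuousOn y (Set.Icc 0 t₀) → y t₀ = x₀ →
          (∀ t ∈ Set.Ioc (0:ℝ) t₀, y t ∈ Metric.ball (0:ℂ) R₀ ∧
            HasDerivAt y (-(b t (y t)) / (t:ℂ)) t) →
          ∀ t ∈ Set.Icc (0:ℝ) t₀, y t = z t)) := by
  have hBr : B ≤ 1 / r := (le_one_div hr hB).1 hrB
  have hb' : ∀ t ∈ Ioc 0 T₀, ∀ x ∈ ball 0 R₀, ‖b t x‖ ≤ m t / r := fun t ht x hx =>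
    calc ‖b t x‖ ≤ B * m t := hb t ht x hx
      _ ≤ 1 / r * m t := mul_le_mul_of_nonneg_right hBr (hm.2.2.1 t ht).le
      _ = m t / r := one_div_mul_eq_div _ _
  exact fun t₀ x₀ hW ht₀ => statement9_general (hbX.mono Ioc_subset_Icc_self) hm.2.1 hm.2.2.2
    hb' hr hTT₀ hRR₀.le hW ht₀
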